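/- arXiv:1103.3819 — 4 statements merged into one kernel-verified Lean document; each statement's English description precedes it below -/
import Mathlib

section
/- Let F be a finite field with q elements and n ≥ 0. Then |{(X, Y, Z) ∈ M_n(F)³ : Tr(X(YZ − ZY)) = 0}| − |{(X, Y, Z) ∈ M_n(F)³ : Tr(X(YZ − ZY)) = 1}| = q^{n²} · |{(Y, Z) ∈ M_n(F)² : YZ = ZY}|. (Dimensional reduction for the quiver with one vertex and three loops x, y, z with superpotential W = x(yz − zy), whose reduced space is the commuting variety; this quiver models the Hilbert scheme of ℂ³.) -/
theorem fiber_card_aux {F : Type*} [Field F] [Fintype F] [DecidableEq F] (n : ℕ)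
    (C : Matrix (Fin n) (Fin n) F) :
    (Nat.card {X : Matrix (Fin n) (Fin n) F // (X * C).trace = 0} : ℤ)
      - Nat.card {X : Matrix (Fin n) (Fin n) F // (X * C).trace = 1}
      = if C = 0 then ((Fintype.card F : ℤ)) ^ (n ^ 2) else 0 := by
  split_ifs with h
  · subst h
    have h1 : Nat.card {X : Matrix (Fin n) (Fin n) F // (X * (0 : Matrix (Fin n) (Fin n) F)).trace = 1} = 0 := by
      rw [Nat.card_eq_zero]
      left
      exact ⟨fun x => by simpa using x.2⟩
    have h0 : Nat.card {X : Matrix (Fin n) (Fin n) F // (X * (0 : Matrix (Fin n) (Fin n) F)).trace = 0}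
        = Nat.card (Matrix (Fin n) (Fin n) F) :=
      Nat.card_congr (Equiv.subtypeUnivEquiv (fun x => by simp))
    have h2 : Nat.card (Matrix (Fin n) (Fin n) F) = Nat.card (Fin n → Fin n → F) :=
      Nat.card_congr Matrix.of.symm
    rw [h1, h0, h2]
    simp [Nat.card_eq_fintype_card, ← pow_mul, sq]
  · obtain ⟨X1, hX1⟩ : ∃ X : Matrix (Fin n) (Fin n) F, (X * C).trace ≠ 0 := by
      by_contra! hc
      exact h (Matrix.ext_iff_trace_mul_left.2 (fun X => by simpa using hc X))
    obtain ⟨X0, hX0⟩ : ∃ X : Matrix (Fin n) (Fin n) F, (X * C).trace = 1 :=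
      ⟨((X1 * C).trace)⁻¹ • X1, by simp [Matrix.trace_smul, hX1]⟩
    rw [sub_eq_zero, Nat.cast_inj]
    exact Nat.card_congr ((Equiv.addRight X0).subtypeEquiv
      (fun X => by simp [add_mul, Matrix.trace_add, hX0]))

theorem total_card_aux {F : Type*} [Field F] [Fintype F] [DecidableEq F] (n : ℕ) (c : F) :
    (Nat.card {p : Matrix (Fin n) (Fin n) F × Matrix (Fin n) (Fin n) F ×
        Matrix (Fin n) (Fin n) F //
        (p.1 * (p.2.1 * p.2.2 - p.2.2 * p.2.1)).trace = c} : ℤ)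
      = ∑ r : Matrix (Fin n) (Fin n) F × Matrix (Fin n) (Fin n) F,
        (Nat.card {X : Matrix (Fin n) (Fin n) F //
          (X * (r.1 * r.2 - r.2 * r.1)).trace = c} : ℤ) := by
  rw [← Nat.cast_sum, ← Nat.card_sigma, Nat.cast_inj]
  exact Nat.card_congr
    { toFun := fun p => ⟨p.1.2, p.1.1, p.2⟩
      invFun := fun s => ⟨(s.2.1, s.1), s.2.2⟩
      left_inv := fun _ => rfl
      right_inv := fun _ => rfl }

/-- Dimensional reduction for the quiver with one vertex and three
loops `x, y, z` and superpotential `W = x(yz - zy)`: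
`|{Tr(X(YZ-ZY)) = 0}| - |{Tr(X(YZ-ZY)) = 1}| = q^(n²) · |{(Y,Z) : YZ = ZY}|`. -/
theorem hilb_C3_dimensional_reduction {F : Type*} [Field F] [Fintype F] (n : ℕ) :
    (Nat.card {p : Matrix (Fin n) (Fin n) F × Matrix (Fin n) (Fin n) F ×
        Matrix (Fin n) (Fin n) F //
        (p.1 * (p.2.1 * p.2.2 - p.2.2 * p.2.1)).trace = 0} : ℤ)
      - Nat.card {p : Matrix (Fin n) (Fin n) F × Matrix (Fin n) (Fin n) F ×
        Matrix (Fin n) (Fin n) F //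
        (p.1 * (p.2.1 * p.2.2 - p.2.2 * p.2.1)).trace = 1}
      = (Fintype.card F) ^ (n ^ 2)
        * Nat.card {p : Matrix (Fin n) (Fin n) F × Matrix (Fin n) (Fin n) F //
            p.1 * p.2 = p.2 * p.1} := by
  classical
  rw [total_card_aux, total_card_aux, ← Finset.sum_sub_distrib]
  simp_rw [fiber_card_aux, sub_eq_zero]
  rw [← Finset.sum_filter, Finset.sum_const, nsmul_eq_mul, mul_comm, Nat.card_eq_fintype_card,
    Fintype.card_subtype]
end

section
/- Let k be a field, I a type of vertices, and V_i a k-vector space for each i ∈ I. Let A be a type of arrows with source and target maps s, t : A → I and linear maps M_a : V_{s(a)} → V_{t(a)}, and let there be framing vectors m_l ∈ V_{c(l)} indexed by l ∈ L with c : L → I. Assume the framing vectors generate the representation: every family of subspaces (U_i ⊆ V_i)_{i∈I} satisfying m_l ∈ U_{c(l)} for all l and M_a(U_{s(a)}) ⊆ U_{t(a)} for all a must have U_i = V_i for every i. Then any family of linear automorphisms g_i : V_i → V_i satisfying g_{t(a)} ∘ M_a = M_a ∘ g_{s(a)} for all arrows a and g_{c(l)}(m_l) = m_l for all l must satisfy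 g_i = id_{V_i} for every i. (Freeness of the GL(v)-action on the stable locus U^Q(v, f) of framed quiver representations.) -/
/-- Freeness of the `GL(v)`-action on the stable locus of framed
quiver representations: if the framing vectors generate the representation,
then any family of linear automorphisms commuting with all arrow maps and
fixing all framing vectors is the identity. -/
theorem stable_framed_rep_free_action
    {k : Type*} [Field k] {I : Type*} {V : I → Type*}
    [∀ i, AddCommGroup (V i)] [∀ i, Module k (V i)]
    {A : Type*} (s t : A → I) (M : ∀ a : A, V (s a) →ₗ[k] V (t a))
    {L : Type*} (c : L → I) (m : ∀ l : L, V (c l))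
    (hgen : ∀ U : ∀ i, Submodule k (V i),
      (∀ l, m l ∈ U (c l)) →
      (∀ a : A, ∀ x ∈ U (s a), M a x ∈ U (t a)) →
      ∀ i, U i = ⊤)
    (g : ∀ i, V i ≃ₗ[k] V i)
    (hcomm : ∀ (a : A) (x : V (s a)), g (t a) (M a x) = M a (g (s a) x))
    (hfix : ∀ l, g (c l) (m l) = m l) :
    ∀ (i : I) (x : V i), g i x = x := by
  intro i x
  have h := hgen (fun i => LinearMap.eqLocus (g i).toLinearMap LinearMap.id)
    (fun l => by
      rw [LinearMap.mem_eqLocus]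
      exact hfix l)
    (fun a x hx => by
      rw [LinearMap.mem_eqLocus] at hx ⊢
      have hx' : g (s a) x = x := hx
      change g (t a) (M a x) = M a x
      rw [hcomm, hx'])
    i
  have hx : x ∈ LinearMap.eqLocus (g i).toLinearMap LinearMap.id := by
    have h' : LinearMap.eqLocus (g i).toLinearMap LinearMap.id = ⊤ := h
    rw [h']
    exact Submodule.mem_top
  rw [LinearMap.mem_eqLocus] at hx
  exact hx
end

section
/- Let F be a finite field with q elements and 0 ≤ w ≤ n. For a triple of n × n matrices (X, Y, Z) over F and a vector m ∈ F^n, let S(X, Y, Z, m) denote the smallest linear subspace of F^n containing m and invariant under X, Y and Z. Let u(w) = |{(X', Y', Z', m') : X', Y', Z' ∈ M_w(F), m' ∈ F^w, S(X', Y', Z', m') = F^w}| and let G(w, n) be the number of w-dimensional subspaces of F^n. Then |{(X, Y, Z, m) ∈ M_n(F)³ × F^n : dim S(X, Y, Z, m) = w}| = G(w, n) · q^{3w(n−w) + 3(n−w)²} · u(w). (This is the point-count form of the stratification of framed representations by the dimension of the subspace generated by the framing vector, a Zariski fibration over the Grassmannian.) -/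
/-- The smallest subspace of `F^n` containing `m` and invariant under the
three matrices `X`, `Y`, `Z` (the span `ℂ⟨X,Y,Z⟩{m}`). -/
def genSpan {F : Type*} [Field F] {n : ℕ}
    (X Y Z : Matrix (Fin n) (Fin n) F) (m : Fin n → F) :
    Submodule F (Fin n → F) :=
  sInf {U : Submodule F (Fin n → F) | m ∈ U ∧
    (∀ v ∈ U, X.mulVec v ∈ U) ∧ (∀ v ∈ U, Y.mulVec v ∈ U) ∧
    (∀ v ∈ U, Z.mulVec v ∈ U)}

/-- `genSpan` is compatible with an intertwining linear map. -/
theorem genSpan_map_aux {F : Type*} [Field F] {n w : ℕ}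
    (i : (Fin w → F) →ₗ[F] (Fin n → F))
    (X Y Z : Matrix (Fin n) (Fin n) F) (A B C : Matrix (Fin w) (Fin w) F) (m : Fin w → F)
    (hX : ∀ v, X.mulVec (i v) = i (A.mulVec v))
    (hY : ∀ v, Y.mulVec (i v) = i (B.mulVec v))
    (hZ : ∀ v, Z.mulVec (i v) = i (C.mulVec v)) :
    genSpan X Y Z (i m) = (genSpan A B C m).map i := by
  have mem : ∀ {k : ℕ} (X Y Z : Matrix (Fin k) (Fin k) F) (m : Fin k → F),
      genSpan X Y Z m ∈ {U : Submodule F (Fin k → F) | m ∈ U ∧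
        (∀ v ∈ U, X.mulVec v ∈ U) ∧ (∀ v ∈ U, Y.mulVec v ∈ U) ∧
        (∀ v ∈ U, Z.mulVec v ∈ U)} := by
    intro k X Y Z m
    refine ⟨?_, ?_, ?_, ?_⟩
    · exact Submodule.mem_sInf.2 fun U hU => hU.1
    · exact fun v hv => Submodule.mem_sInf.2 fun U hU =>
        hU.2.1 v (Submodule.mem_sInf.1 hv U hU)
    · exact fun v hv => Submodule.mem_sInf.2 fun U hU =>
        hU.2.2.1 v (Submodule.mem_sInf.1 hv U hU)
    · exact fun v hv => Submodule.mem_sInf.2 fun U hU =>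
        hU.2.2.2 v (Submodule.mem_sInf.1 hv U hU)
  obtain ⟨h0, h1, h2, h3⟩ := mem A B C m
  obtain ⟨k0, k1, k2, k3⟩ := mem X Y Z (i m)
  apply le_antisymm
  · refine sInf_le ⟨⟨m, h0, rfl⟩, ?_, ?_, ?_⟩
    · rintro _ ⟨v, hv, rfl⟩
      exact ⟨_, h1 v hv, (hX v).symm⟩
    · rintro _ ⟨v, hv, rfl⟩
      exact ⟨_, h2 v hv, (hY v).symm⟩
    · rintro _ ⟨v, hv, rfl⟩
      exact ⟨_, h3 v hv, (hZ v).symm⟩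
  · rw [Submodule.map_le_iff_le_comap]
    refine sInf_le ⟨k0, ?_, ?_, ?_⟩
    · intro v hv
      rw [Submodule.mem_comap, ← hX]; exact k1 _ hv
    · intro v hv
      rw [Submodule.mem_comap, ← hY]; exact k2 _ hv
    · intro v hv
      rw [Submodule.mem_comap, ← hZ]; exact k3 _ hv

theorem genSpan_props_aux {F : Type*} [Field F] {k : ℕ}
    (X Y Z : Matrix (Fin k) (Fin k) F) (m : Fin k → F) (S : Submodule F (Fin k → F))
    (h : genSpan X Y Z m = S) :
    m ∈ S ∧ (∀ v ∈ S, X.mulVec v ∈ S) ∧ (∀ v ∈ S, Y.mulVec v ∈ S) ∧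
        (∀ v ∈ S, Z.mulVec v ∈ S) := by
  subst h
  refine ⟨?_, ?_, ?_, ?_⟩
  · exact Submodule.mem_sInf.2 fun U hU => hU.1
  · exact fun v hv => Submodule.mem_sInf.2 fun U hU =>
      hU.2.1 v (Submodule.mem_sInf.1 hv U hU)
  · exact fun v hv => Submodule.mem_sInf.2 fun U hU =>
      hU.2.2.1 v (Submodule.mem_sInf.1 hv U hU)
  · exact fun v hv => Submodule.mem_sInf.2 fun U hU =>
      hU.2.2.2 v (Submodule.mem_sInf.1 hv U hU)

/-- Block description of the matrices preserving a subspace `S`. -/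
theorem exists_block_aux {F : Type*} [Field F] {n w : ℕ}
    (S C : Submodule F (Fin n → F)) (hC : IsCompl S C) (e : (Fin w → F) ≃ₗ[F] S) :
    ∃ T : Matrix (Fin w) (Fin w) F × (C →ₗ[F] (Fin n → F)) → Matrix (Fin n) (Fin n) F,
      Function.Injective T ∧
      (∀ A h v, (T (A, h)).mulVec (e v : Fin n → F) = e (A.mulVec v)) ∧
      (∀ X : Matrix (Fin n) (Fin n) F, (∀ v ∈ S, X.mulVec v ∈ S) → ∃ p, T p = X) := by
  let g : Matrix (Fin w) (Fin w) F → (S →ₗ[F] (Fin n → F)) := fun A =>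
    S.subtype ∘ₗ e.toLinearMap ∘ₗ Matrix.toLin' A ∘ₗ e.symm.toLinearMap
  let T : Matrix (Fin w) (Fin w) F × (C →ₗ[F] (Fin n → F)) → Matrix (Fin n) (Fin n) F :=
    fun p => LinearMap.toMatrix' (LinearMap.ofIsCompl hC (g p.1) p.2)
  have hT : ∀ p v, (T p).mulVec v = LinearMap.ofIsCompl hC (g p.1) p.2 v := by
    intro p v
    rw [← Matrix.toLin'_apply, Matrix.toLin'_toMatrix']
  have hS : ∀ A h v, (T (A, h)).mulVec (e v : Fin n → F) = e (A.mulVec v) := by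
    intro A h v
    rw [hT, LinearMap.ofIsCompl_apply_left]
    simp [g]
  have hCC : ∀ A h (v : C), (T (A, h)).mulVec (v : Fin n → F) = h v := by
    intro A h v
    rw [hT, LinearMap.ofIsCompl_apply_right]
  refine ⟨T, ?_, hS, ?_⟩
  · rintro ⟨A, h⟩ ⟨A', h'⟩ heq
    have h1 : A = A' := by
      apply Matrix.toLin'.injective
      apply LinearMap.ext
      intro v
      have := hS A h v
      rw [heq, hS] at this
      simpa using (e.injective (Subtype.ext this)).symm
    have h2 : h = h' := by
      apply LinearMap.ext
      intro v
      rw [← hCC A h v, heq, hCC]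
    rw [h1, h2]
  · intro X hX
    let r : S →ₗ[F] S := (Matrix.toLin' X).restrict (fun v hv => by simpa using hX v hv)
    refine ⟨(LinearMap.toMatrix' (e.symm.toLinearMap ∘ₗ r ∘ₗ e.toLinearMap),
      Matrix.toLin' X ∘ₗ C.subtype), ?_⟩
    apply Matrix.toLin'.injective
    simp only [T, Matrix.toLin'_toMatrix']
    apply LinearMap.ofIsCompl_eq
    · intro u
      simp [g, r]
    · intro u
      simp

theorem fibre_card_aux {F : Type*} [Field F] [Fintype F] (n w : ℕ) (hw : w ≤ n)
    (S : Submodule F (Fin n → F)) (hS : Module.finrank F S = w) :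
    Nat.card {p : Matrix (Fin n) (Fin n) F × Matrix (Fin n) (Fin n) F ×
        Matrix (Fin n) (Fin n) F × (Fin n → F) //
        genSpan p.1 p.2.1 p.2.2.1 p.2.2.2 = S}
      = (Fintype.card F) ^ (3 * w * (n - w) + 3 * (n - w) ^ 2)
        * Nat.card {p : Matrix (Fin w) (Fin w) F × Matrix (Fin w) (Fin w) F ×
            Matrix (Fin w) (Fin w) F × (Fin w → F) //
            genSpan p.1 p.2.1 p.2.2.1 p.2.2.2 = ⊤} := by
  obtain ⟨C, hC⟩ := Submodule.exists_isCompl S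
  have e : (Fin w → F) ≃ₗ[F] S := LinearEquiv.ofFinrankEq _ _ (by simp [hS])
  obtain ⟨T, Tinj, TS, Tsurj⟩ := exists_block_aux S C hC e
  let i : (Fin w → F) →ₗ[F] (Fin n → F) := S.subtype ∘ₗ e.toLinearMap
  have hi : Function.Injective i := Subtype.val_injective.comp e.injective
  have hmap : Submodule.map i ⊤ = S := by
    ext v
    constructor
    · rintro ⟨u, -, rfl⟩
      exact (e u).2
    · intro hv
      exact ⟨e.symm ⟨v, hv⟩, trivial, by simp [i]⟩
  have key : ∀ (A B D : Matrix (Fin w) (Fin w) F) (a b d : C →ₗ[F] (Fin n → F)) (m : Fin w → F),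
      genSpan (T (A, a)) (T (B, b)) (T (D, d)) (i m) = S ↔ genSpan A B D m = ⊤ := by
    intro A B D a b d m
    rw [genSpan_map_aux i _ _ _ A B D m (TS A a) (TS B b) (TS D d)]
    constructor
    · intro h
      apply Submodule.map_injective_of_injective hi
      rw [h, hmap]
    · intro h
      rw [h, hmap]
  let H := C →ₗ[F] (Fin n → F)
  let Φ : (H × H × H) × {p : Matrix (Fin w) (Fin w) F × Matrix (Fin w) (Fin w) F ×
            Matrix (Fin w) (Fin w) F × (Fin w → F) //
            genSpan p.1 p.2.1 p.2.2.1 p.2.2.2 = ⊤} →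
      {p : Matrix (Fin n) (Fin n) F × Matrix (Fin n) (Fin n) F ×
        Matrix (Fin n) (Fin n) F × (Fin n → F) //
        genSpan p.1 p.2.1 p.2.2.1 p.2.2.2 = S} := fun x =>
    ⟨(T (x.2.1.1, x.1.1), T (x.2.1.2.1, x.1.2.1), T (x.2.1.2.2.1, x.1.2.2), i x.2.1.2.2.2),
      (key _ _ _ _ _ _ _).2 x.2.2⟩
  have hΦ : Function.Bijective Φ := by
    constructor
    · rintro ⟨⟨a, b, d⟩, ⟨⟨A, B, D, m⟩, h⟩⟩ ⟨⟨a', b', d'⟩, ⟨⟨A', B', D', m'⟩, h'⟩⟩ heq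
      have h0 := congrArg Subtype.val heq
      simp only [Φ, Prod.mk.injEq] at h0
      obtain ⟨h1, h2, h3, h4⟩ := h0
      have h1 := Tinj h1
      have h2 := Tinj h2
      have h3 := Tinj h3
      have h4 := hi h4
      simp only [Prod.mk.injEq] at h1 h2 h3
      obtain ⟨rfl, rfl⟩ := h1
      obtain ⟨rfl, rfl⟩ := h2
      obtain ⟨rfl, rfl⟩ := h3
      subst h4
      rfl
    · rintro ⟨⟨X, Y, Z, m⟩, h⟩
      obtain ⟨hm, hX, hY, hZ⟩ := genSpan_props_aux X Y Z m S h
      obtain ⟨⟨A, a⟩, rfl⟩ := Tsurj X hX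
      obtain ⟨⟨B, b⟩, rfl⟩ := Tsurj Y hY
      obtain ⟨⟨D, d⟩, rfl⟩ := Tsurj Z hZ
      obtain ⟨m, rfl⟩ : ∃ m', i m' = m := ⟨e.symm ⟨m, hm⟩, by simp [i]⟩
      exact ⟨⟨(a, b, d), ⟨(A, B, D, m), (key _ _ _ _ _ _ _).1 h⟩⟩, rfl⟩
  have hH : Nat.card H = Fintype.card F ^ ((n - w) * n) := by
    have hc : Module.finrank F C = n - w := by
      have := Submodule.finrank_add_eq_of_isCompl hC
      rw [hS, Module.finrank_fin_fun] at this
      omega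
    rw [Module.natCard_eq_pow_finrank (K := F), Module.finrank_linearMap, hc,
      Module.finrank_fin_fun, Nat.card_eq_fintype_card]
  rw [← Nat.card_congr (Equiv.ofBijective Φ hΦ), Nat.card_prod, Nat.card_prod, Nat.card_prod, hH,
    ← pow_add, ← pow_add]
  congr 2
  obtain ⟨k, rfl⟩ := Nat.exists_eq_add_of_le hw
  rw [Nat.add_sub_cancel_left]
  ring

theorem framed_stratum_pointcount {F : Type*} [Field F] [Fintype F]
    (n w : ℕ) (hw : w ≤ n) :
    Nat.card {p : Matrix (Fin n) (Fin n) F × Matrix (Fin n) (Fin n) F ×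
        Matrix (Fin n) (Fin n) F × (Fin n → F) //
        Module.finrank F (genSpan p.1 p.2.1 p.2.2.1 p.2.2.2) = w}
      = Nat.card {S : Submodule F (Fin n → F) // Module.finrank F S = w}
        * (Fintype.card F) ^ (3 * w * (n - w) + 3 * (n - w) ^ 2)
        * Nat.card {p : Matrix (Fin w) (Fin w) F × Matrix (Fin w) (Fin w) F ×
            Matrix (Fin w) (Fin w) F × (Fin w → F) //
            genSpan p.1 p.2.1 p.2.2.1 p.2.2.2 = ⊤} := by
  classical
  let Q := {S : Submodule F (Fin n → F) // Module.finrank F S = w}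
  let P := Matrix (Fin n) (Fin n) F × Matrix (Fin n) (Fin n) F ×
        Matrix (Fin n) (Fin n) F × (Fin n → F)
  have E : {p : P // Module.finrank F (genSpan p.1 p.2.1 p.2.2.1 p.2.2.2) = w} ≃
      Σ S : Q, {p : P // genSpan p.1 p.2.1 p.2.2.1 p.2.2.2 = S.1} :=
    { toFun := fun p => ⟨⟨_, p.2⟩, ⟨p.1, rfl⟩⟩
      invFun := fun x => ⟨x.2.1, by rw [x.2.2]; exact x.1.2⟩
      left_inv := fun p => rfl
      right_inv := by
        rintro ⟨⟨S, hS⟩, ⟨p, hp⟩⟩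
        dsimp only at hp
        subst hp
        rfl }
  have : Finite (Submodule F (Fin n → F)) := inferInstance
  have : Fintype Q := Fintype.ofFinite Q
  rw [Nat.card_congr E, Nat.card_sigma,
    Finset.sum_congr rfl (fun S _ => fibre_card_aux n w hw S.1 S.2), Finset.sum_const,
    Finset.card_univ, smul_eq_mul, ← Nat.card_eq_fintype_card]
  exact (mul_assoc _ _ _).symm
end

section
/- Let F be a finite field with q elements. For m ≥ 0 let C(m) = |{(Y, Z) ∈ M_m(F)² : YZ = ZY}|, and for w ≥ 0 let y₀(w) (respectively y₁(w)) be the number of tuples (X, Y, Z, m) with X, Y, Z ∈ M_w(F) and m ∈ F^w such that the smallest subspace containing m and invariant under X, Y, Z is all of F^w and Tr(X(YZ − ZY)) = 0 (respectively = 1). Let G(w, n) denote the number of w-dimensional subspaces of F^n. Then for every n ≥ 0, q^{n² + n} · C(n) = Σ_{w = 0}^{n} G(w, n) · q^{3w(n−w) + (n−w)²} · (y₀(w) − y₁(w)) · C(n − w), as an identity of integers. (This is the point-count instance of the reduction theorem R^{Q,W}(𝕃^{f/2} t) = DT^{Q,W}_f(t) ∗ R^{Q,W}(𝕃^{−f/2}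 t) for the quiver with one vertex, three loops x, y, z, superpotential W = x(yz − zy) and framing f = 1, which models the Hilbert schemes of ℂ³.) -/
/-- The number of commuting pairs of `m × m` matrices over `F`. -/
noncomputable def commCount (F : Type*) [Field F] [Fintype F] (m : ℕ) : ℕ :=
  Nat.card {p : Matrix (Fin m) (Fin m) F × Matrix (Fin m) (Fin m) F //
    p.1 * p.2 = p.2 * p.1}

/-- The number of stable framed tuples `(X, Y, Z, m)` on `F^w` with
`Tr(X(YZ - ZY)) = c`. -/
noncomputable def stableFibreCount (F : Type*) [Field F] [Fintype F] (w : ℕ) (c : F) : ℕ :=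
  Nat.card {p : Matrix (Fin w) (Fin w) F × Matrix (Fin w) (Fin w) F ×
    Matrix (Fin w) (Fin w) F × (Fin w → F) //
    genSpan p.1 p.2.1 p.2.2.1 p.2.2.2 = ⊤ ∧
    (p.1 * (p.2.1 * p.2.2.1 - p.2.2.1 * p.2.1)).trace = c}

/-- The number `G(w, n)` of `w`-dimensional subspaces of `F^n`. -/
noncomputable def grassCount (F : Type*) [Field F] [Fintype F] (w n : ℕ) : ℕ :=
  Nat.card {S : Submodule F (Fin n → F) // Module.finrank F S = w}

open Classical in
/-- Signed weight: `1` at `0`, `-1` at `1`. -/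
noncomputable def gW {F : Type*} [Field F] (c : F) : ℤ :=
  (if c = 0 then 1 else 0) - (if c = 1 then 1 else 0)

theorem gW_sum {F : Type*} [Field F] [Fintype F] (a : F) : ∑ t : F, gW (a + t) = 0 := by
  classical
  rw [show ∑ t : F, gW (a + t) = ∑ t : F, gW t from
    Fintype.sum_equiv (Equiv.addLeft a) _ _ fun t => rfl]
  simp [gW, Finset.sum_sub_distrib]

theorem card_mat (F : Type*) [Fintype F] (ι κ : Type*) [Fintype ι] [Fintype κ]
    [DecidableEq ι] [DecidableEq κ] [Fintype (Matrix ι κ F)] :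
    Fintype.card (Matrix ι κ F) = Fintype.card F ^ (Fintype.card ι * Fintype.card κ) := by
  rw [← Nat.card_eq_fintype_card]
  change Nat.card (ι → κ → F) = _
  simp [mul_comm (Fintype.card ι), pow_mul]

theorem sumX {F : Type*} [Field F] [Fintype F] {κ : Type*} [Fintype κ] [DecidableEq κ]
    (K : Matrix κ κ F) (a : F) [Decidable (K = 0)] [DecidableEq F] :
    ∑ X : Matrix κ κ F, gW (a + (X * K).trace)
      = if K = 0 then (Fintype.card F : ℤ) ^ (Fintype.card κ ^ 2) * gW a else 0 := by
  split_ifs with h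
  · subst h
    simp [card_mat, sq]
  · obtain ⟨i, j, hij⟩ : ∃ i j, K i j ≠ 0 := by
      by_contra hc
      push Not at hc
      exact h (by ext i j; simpa using hc i j)
    set X0 : Matrix κ κ F := Matrix.single j i (K i j)⁻¹
    have h0 : (X0 * K).trace = 1 := by
      simp [X0, Matrix.trace_single_mul, hij]
    have hs : ∀ t : F, ∑ X : Matrix κ κ F, gW (a + (X * K).trace)
        = ∑ X : Matrix κ κ F, gW ((a + (X * K).trace) + t) := by
      intro t
      symm
      refine Fintype.sum_equiv (Equiv.addRight (t • X0)) _ _ fun X => ?_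
      simp [add_mul, Matrix.trace_add, h0, add_assoc]
    have h1 : ∑ t : F, ∑ X : Matrix κ κ F, gW (a + (X * K).trace) = 0 := by
      rw [Finset.sum_congr rfl fun t _ => hs t, Finset.sum_comm]
      simp [gW_sum]
    simpa using h1

/-- `genSpan` over an arbitrary index type. -/
def genS {F : Type*} [Field F] {ι : Type*} [Fintype ι]
    (p : Matrix ι ι F × Matrix ι ι F × Matrix ι ι F × (ι → F)) :
    Submodule F (ι → F) :=
  sInf {U : Submodule F (ι → F) | p.2.2.2 ∈ U ∧
    (∀ v ∈ U, p.1.mulVec v ∈ U) ∧ (∀ v ∈ U, p.2.1.mulVec v ∈ U) ∧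
    (∀ v ∈ U, p.2.2.1.mulVec v ∈ U)}

theorem genS_mem {F : Type*} [Field F] {ι : Type*} [Fintype ι]
    (p : Matrix ι ι F × Matrix ι ι F × Matrix ι ι F × (ι → F)) :
    p.2.2.2 ∈ genS p ∧
    (∀ v ∈ genS p, p.1.mulVec v ∈ genS p) ∧ (∀ v ∈ genS p, p.2.1.mulVec v ∈ genS p) ∧
    (∀ v ∈ genS p, p.2.2.1.mulVec v ∈ genS p) := by
  simp only [genS, Submodule.mem_sInf, Set.mem_ofPred_eq]
  refine ⟨fun U h => h.1, fun v hv U h => h.2.1 v (hv U h), fun v hv U h => h.2.2.1 v (hv U h),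
    fun v hv U h => h.2.2.2 v (hv U h)⟩

theorem genS_map {F : Type*} [Field F] {ι κ : Type*} [Fintype ι] [Fintype κ]
    (p : Matrix ι ι F × Matrix ι ι F × Matrix ι ι F × (ι → F))
    (p' : Matrix κ κ F × Matrix κ κ F × Matrix κ κ F × (κ → F))
    (j : (ι → F) →ₗ[F] (κ → F)) (hm : p'.2.2.2 = j p.2.2.2)
    (hX : ∀ v, p'.1.mulVec (j v) = j (p.1.mulVec v))
    (hY : ∀ v, p'.2.1.mulVec (j v) = j (p.2.1.mulVec v))
    (hZ : ∀ v, p'.2.2.1.mulVec (j v) = j (p.2.2.1.mulVec v)) :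
    genS p' = (genS p).map j := by
  obtain ⟨a, b, c, d⟩ := genS_mem p
  obtain ⟨a', b', c', d'⟩ := genS_mem p'
  apply le_antisymm
  · apply sInf_le
    refine ⟨⟨_, a, hm.symm⟩, ?_, ?_, ?_⟩
    · rintro _ ⟨v, hv, rfl⟩
      exact ⟨_, b v hv, (hX v).symm⟩
    · rintro _ ⟨v, hv, rfl⟩
      exact ⟨_, c v hv, (hY v).symm⟩
    · rintro _ ⟨v, hv, rfl⟩
      exact ⟨_, d v hv, (hZ v).symm⟩
  · rw [Submodule.map_le_iff_le_comap]
    apply sInf_le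
    refine ⟨by simpa [hm] using a', fun v hv => ?_, fun v hv => ?_, fun v hv => ?_⟩
    · simpa [hX] using b' _ hv
    · simpa [hY] using c' _ hv
    · simpa [hZ] using d' _ hv

/-- The Chern–Simons functional. -/
def csW {F : Type*} [Field F] {ι : Type*} [Fintype ι]
    (p : Matrix ι ι F × Matrix ι ι F × Matrix ι ι F × (ι → F)) : F :=
  (p.1 * (p.2.1 * p.2.2.1 - p.2.2.1 * p.2.1)).trace

/-- The inclusion of the first summand. -/
def jInc (F : Type*) [Field F] (ι κ : Type*) : (ι → F) →ₗ[F] (ι ⊕ κ → F) where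
  toFun v := Sum.elim v 0
  map_add' v w := by ext (i | i) <;> simp
  map_smul' v w := by ext (i | i) <;> simp

theorem jInc_inj (F : Type*) [Field F] (ι κ : Type*) :
    Function.Injective (jInc F ι κ) := by
  intro v w h
  ext i
  exact congrFun h (Sum.inl i)

theorem mem_range_jInc {F : Type*} [Field F] {ι κ : Type*} (v : ι ⊕ κ → F) :
    v ∈ LinearMap.range (jInc F ι κ) ↔ ∀ k, v (Sum.inr k) = 0 := by
  constructor
  · rintro ⟨u, rfl⟩ k
    simp [jInc]
  · intro h
    refine ⟨fun i => v (Sum.inl i), ?_⟩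
    ext (i | i)
    · simp [jInc]
    · simp [jInc, h]

/-- Assemble a block-triangular tuple. -/
def asm {F : Type*} [Field F] {ι κ : Type*}
    (s : Matrix ι ι F × Matrix ι ι F × Matrix ι ι F × (ι → F))
    (t : Matrix κ κ F × Matrix κ κ F × Matrix κ κ F)
    (u : Matrix ι κ F × Matrix ι κ F × Matrix ι κ F) :
    Matrix (ι ⊕ κ) (ι ⊕ κ) F × Matrix (ι ⊕ κ) (ι ⊕ κ) F × Matrix (ι ⊕ κ) (ι ⊕ κ) F
      × (ι ⊕ κ → F) :=
  (Matrix.fromBlocks s.1 u.1 0 t.1, Matrix.fromBlocks s.2.1 u.2.1 0 t.2.1,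
    Matrix.fromBlocks s.2.2.1 u.2.2 0 t.2.2, jInc F ι κ s.2.2.2)

theorem fromBlocks_jInc {F : Type*} [Field F] {ι κ : Type*} [Fintype ι] [Fintype κ]
    (A : Matrix ι ι F) (B : Matrix ι κ F) (D : Matrix κ κ F) (v : ι → F) :
    (Matrix.fromBlocks A B 0 D).mulVec (jInc F ι κ v) = jInc F ι κ (A.mulVec v) := by
  change (Matrix.fromBlocks A B 0 D).mulVec (Sum.elim v 0) = Sum.elim (A.mulVec v) 0
  simp [Matrix.fromBlocks_mulVec]

theorem genS_asm {F : Type*} [Field F] {ι κ : Type*} [Fintype ι] [Fintype κ]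
    (s : Matrix ι ι F × Matrix ι ι F × Matrix ι ι F × (ι → F))
    (t : Matrix κ κ F × Matrix κ κ F × Matrix κ κ F)
    (u : Matrix ι κ F × Matrix ι κ F × Matrix ι κ F) :
    genS (asm s t u) = LinearMap.range (jInc F ι κ) ↔ genS s = ⊤ := by
  rw [genS_map s (asm s t u) (jInc F ι κ) rfl (fun v => fromBlocks_jInc _ _ _ v)
    (fun v => fromBlocks_jInc _ _ _ v) (fun v => fromBlocks_jInc _ _ _ v), ← Submodule.map_top]
  exact (Submodule.map_injective_of_injective (jInc_inj F ι κ)).eq_iff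

theorem csW_asm {F : Type*} [Field F] {ι κ : Type*} [Fintype ι] [Fintype κ]
    (s : Matrix ι ι F × Matrix ι ι F × Matrix ι ι F × (ι → F))
    (t : Matrix κ κ F × Matrix κ κ F × Matrix κ κ F)
    (u : Matrix ι κ F × Matrix ι κ F × Matrix ι κ F) :
    csW (asm s t u) = csW s + (t.1 * (t.2.1 * t.2.2 - t.2.2 * t.2.1)).trace := by
  simp [csW, asm, Matrix.fromBlocks_multiply, sub_eq_add_neg, Matrix.fromBlocks_neg,
    Matrix.fromBlocks_add]
  simp [Matrix.trace, Fintype.sum_sum_type]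

theorem block_zero {F : Type*} [Field F] {ι κ : Type*} [Fintype ι] [Fintype κ]
    (X : Matrix (ι ⊕ κ) (ι ⊕ κ) F)
    (h : ∀ v ∈ LinearMap.range (jInc F ι κ), X.mulVec v ∈ LinearMap.range (jInc F ι κ)) :
    X = Matrix.fromBlocks X.toBlocks₁₁ X.toBlocks₁₂ 0 X.toBlocks₂₂ := by
  classical
  have h0 : X.toBlocks₂₁ = 0 := by
    ext a b
    have := (mem_range_jInc _).1 (h _ ⟨Pi.single b 1, rfl⟩) a
    have e : jInc F ι κ (Pi.single b 1) = Pi.single (Sum.inl b) 1 := by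
      ext (i | i) <;> simp [jInc, Pi.single_apply]
    rw [e] at this
    simpa [Matrix.toBlocks₂₁] using this
  conv_lhs => rw [← Matrix.fromBlocks_toBlocks X, h0]

/-- Tuples generating the first summand are the block-triangular ones with stable corner. -/
theorem asm_bij {F : Type*} [Field F] {ι κ : Type*} [Fintype ι] [Fintype κ] :
    Function.Bijective (fun x :
      {s : Matrix ι ι F × Matrix ι ι F × Matrix ι ι F × (ι → F) // genS s = ⊤} ×
      (Matrix κ κ F × Matrix κ κ F × Matrix κ κ F) ×
      (Matrix ι κ F × Matrix ι κ F × Matrix ι κ F) =>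
      (⟨asm x.1.1 x.2.1 x.2.2, (genS_asm _ _ _).2 x.1.2⟩ :
        {p : Matrix (ι ⊕ κ) (ι ⊕ κ) F × Matrix (ι ⊕ κ) (ι ⊕ κ) F × Matrix (ι ⊕ κ) (ι ⊕ κ) F
      × (ι ⊕ κ → F) // genS p = LinearMap.range (jInc F ι κ)})) := by
  constructor
  · rintro ⟨⟨⟨X, Y, Z, m⟩, hs⟩, ⟨X2, Y2, Z2⟩, ⟨X3, Y3, Z3⟩⟩
      ⟨⟨⟨X', Y', Z', m'⟩, hs'⟩, ⟨X2', Y2', Z2'⟩, ⟨X3', Y3', Z3'⟩⟩ h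
    simp only [asm, Subtype.mk.injEq, Prod.mk.injEq, Matrix.fromBlocks_inj,
      (jInc_inj F ι κ).eq_iff] at h ⊢
    tauto
  · rintro ⟨⟨X, Y, Z, m⟩, hp⟩
    obtain ⟨a, b, c, d⟩ := genS_mem (X, Y, Z, m)
    rw [hp] at a b c d
    obtain ⟨m1, hm1⟩ := a
    have key : asm (X.toBlocks₁₁, Y.toBlocks₁₁, Z.toBlocks₁₁, m1)
        (X.toBlocks₂₂, Y.toBlocks₂₂, Z.toBlocks₂₂)
        (X.toBlocks₁₂, Y.toBlocks₁₂, Z.toBlocks₁₂) = (X, Y, Z, m) := by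
      simp only [asm, ← block_zero X b, ← block_zero Y c, ← block_zero Z d, hm1]
    have hs := (genS_asm (X.toBlocks₁₁, Y.toBlocks₁₁, Z.toBlocks₁₁, m1)
        (X.toBlocks₂₂, Y.toBlocks₂₂, Z.toBlocks₂₂)
        (X.toBlocks₁₂, Y.toBlocks₁₂, Z.toBlocks₁₂)).1 (key ▸ hp)
    exact ⟨⟨⟨_, hs⟩, _, _⟩, Subtype.ext key⟩

open Classical in
theorem sum_triples {F : Type*} [Field F] [Fintype F] (k : ℕ) (a : F) :
    ∑ t : Matrix (Fin k) (Fin k) F × Matrix (Fin k) (Fin k) F × Matrix (Fin k) (Fin k) F,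
      gW (a + (t.1 * (t.2.1 * t.2.2 - t.2.2 * t.2.1)).trace)
      = (Fintype.card F : ℤ) ^ (k ^ 2) * commCount F k * gW a := by
  rw [Fintype.sum_prod_type_right]
  simp only [sumX, sub_eq_zero, Fintype.card_fin]
  rw [← Finset.sum_filter, Finset.sum_const, commCount, Nat.card_eq_fintype_card,
    Fintype.card_subtype, nsmul_eq_mul]
  ring

open Classical in
theorem sum_stable {F : Type*} [Field F] [Fintype F] (w : ℕ) :
    ∑ s : {s : Matrix (Fin w) (Fin w) F × Matrix (Fin w) (Fin w) F ×
      Matrix (Fin w) (Fin w) F × (Fin w → F) // genS s = ⊤}, gW (csW s.1)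
      = (stableFibreCount F w 0 : ℤ) - stableFibreCount F w 1 := by
  have h : ∀ c : F, (stableFibreCount F w c : ℤ) = ∑ s : {s : Matrix (Fin w) (Fin w) F ×
      Matrix (Fin w) (Fin w) F ×
      Matrix (Fin w) (Fin w) F × (Fin w → F) // genS s = ⊤}, if csW s.1 = c then 1 else 0 := by
    intro c
    rw [← Finset.sum_subtype (Finset.univ.filter fun s => genS s = ⊤) (by simp)
      (fun s => if csW s = c then (1 : ℤ) else 0), Finset.sum_boole, Finset.filter_filter,
      stableFibreCount, Nat.card_eq_fintype_card, Fintype.card_subtype]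
    rfl
  simp only [gW, Finset.sum_sub_distrib, h]

open Classical in
theorem sum_block {F : Type*} [Field F] [Fintype F] (w k : ℕ) :
    ∑ p : {p : Matrix (Fin w ⊕ Fin k) (Fin w ⊕ Fin k) F × Matrix (Fin w ⊕ Fin k) (Fin w ⊕ Fin k) F
      × Matrix (Fin w ⊕ Fin k) (Fin w ⊕ Fin k) F × (Fin w ⊕ Fin k → F) //
        genS p = LinearMap.range (jInc F (Fin w) (Fin k))}, gW (csW p.1)
      = (Fintype.card F : ℤ) ^ (3 * w * k + k ^ 2)
            * ((stableFibreCount F w 0 : ℤ) - stableFibreCount F w 1)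
            * commCount F k := by
  rw [← asm_bij.sum_comp (fun p => gW (csW p.1)), Fintype.sum_prod_type]
  simp only [csW_asm]
  simp only [Fintype.sum_prod_type_right (γ := ℤ)
    (α₂ := Matrix (Fin w) (Fin k) F × Matrix (Fin w) (Fin k) F × Matrix (Fin w) (Fin k) F),
    sum_triples]
  rw [← sum_stable, Finset.mul_sum, Finset.sum_mul]
  refine Finset.sum_congr rfl fun s _ => ?_
  simp [card_mat]
  ring

theorem exists_e {F : Type*} [Field F] [Fintype F] (n : ℕ) (U : Submodule F (Fin n → F)) (w : ℕ)
    (hw : Module.finrank F U = w) :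
    ∃ e : (Fin w ⊕ Fin (n - w) → F) ≃ₗ[F] (Fin n → F),
      (LinearMap.range (jInc F (Fin w) (Fin (n - w)))).map e.toLinearMap = U := by
  obtain ⟨V, hV⟩ := Submodule.exists_isCompl U
  have hk : Module.finrank F V = n - w := by
    have := Submodule.finrank_add_eq_of_isCompl hV
    simp at this
    omega
  let eU : (Fin w → F) ≃ₗ[F] U := LinearEquiv.ofFinrankEq _ _ (by simp [hw])
  let eV : (Fin (n - w) → F) ≃ₗ[F] V := LinearEquiv.ofFinrankEq _ _ (by simp [hk])
  let e := (LinearEquiv.sumArrowLequivProdArrow (Fin w) (Fin (n - w)) F F).trans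
    ((eU.prodCongr eV).trans (Submodule.prodEquivOfIsCompl U V hV))
  refine ⟨e, ?_⟩
  have he : ∀ v, e (jInc F _ _ v) = eU v := by
    intro v
    have h1 : LinearEquiv.sumArrowLequivProdArrow (Fin w) (Fin (n - w)) F F (jInc F _ _ v)
      = (v, 0) := rfl
    simp [e, h1]
  ext x
  constructor
  · rintro ⟨_, ⟨v, rfl⟩, rfl⟩
    simp [he]
  · intro hx
    refine ⟨_, ⟨eU.symm ⟨x, hx⟩, rfl⟩, ?_⟩
    simp [he]

open Classical in
theorem sum_U {F : Type*} [Field F] [Fintype F] (n : ℕ) (U : Submodule F (Fin n → F)) (w : ℕ)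
    (hw : Module.finrank F U = w) :
    ∑ p : {p : Matrix (Fin n) (Fin n) F × Matrix (Fin n) (Fin n) F ×
      Matrix (Fin n) (Fin n) F × (Fin n → F) // genS p = U}, gW (csW p.1)
      = (Fintype.card F : ℤ) ^ (3 * w * (n - w) + (n - w) ^ 2)
            * ((stableFibreCount F w 0 : ℤ) - stableFibreCount F w 1)
            * commCount F (n - w) := by
  obtain ⟨e, he⟩ := exists_e n U w hw
  rw [← sum_block]
  let c : Matrix (Fin w ⊕ Fin (n - w)) (Fin w ⊕ Fin (n - w)) F ≃ₐ[F] Matrix (Fin n) (Fin n) F :=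
    (Matrix.toLinAlgEquiv'.trans (e.conjAlgEquiv F)).trans LinearMap.toMatrixAlgEquiv'
  have hcl : ∀ A, Matrix.toLin' (c A) = e.conj (Matrix.toLin' A) := by
    intro A
    change Matrix.toLin' (LinearMap.toMatrix' (e.conjAlgEquiv F (Matrix.toLin' A))) = _
    rw [Matrix.toLin'_toMatrix']
    rfl
  have hc : ∀ A v, (c A).mulVec (e v) = e (A.mulVec v) := by
    intro A v
    rw [← Matrix.toLin'_apply, hcl]
    simp [LinearEquiv.conj_apply]
  have htr : ∀ A, (c A).trace = A.trace := by
    intro A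
    have h1 := LinearMap.trace_conj' (Matrix.toLin' A) e
    rw [Matrix.trace_toLin'_eq] at h1
    rw [← h1, ← Matrix.trace_toLin'_eq (c A), hcl]
  let E : (Matrix (Fin w ⊕ Fin (n - w)) (Fin w ⊕ Fin (n - w)) F ×
      Matrix (Fin w ⊕ Fin (n - w)) (Fin w ⊕ Fin (n - w)) F ×
      Matrix (Fin w ⊕ Fin (n - w)) (Fin w ⊕ Fin (n - w)) F × (Fin w ⊕ Fin (n - w) → F)) ≃
      (Matrix (Fin n) (Fin n) F × Matrix (Fin n) (Fin n) F ×
      Matrix (Fin n) (Fin n) F × (Fin n → F)) :=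
    c.toEquiv.prodCongr (c.toEquiv.prodCongr (c.toEquiv.prodCongr e.toEquiv))
  have hg : ∀ p, genS (E p) = (genS p).map e.toLinearMap := fun p =>
    genS_map p (E p) e.toLinearMap rfl (hc _) (hc _) (hc _)
  have hW : ∀ p, csW (E p) = csW p := by
    intro p
    simp only [csW]
    rw [← htr]
    simp only [map_mul, map_sub]
    rfl
  symm
  refine Fintype.sum_equiv (E.subtypeEquiv fun p => ?_) _ _ fun p => ?_
  · rw [hg, ← he]
    exact (Submodule.map_injective_of_injective e.injective).eq_iff.symm
  · simp [hW]

/-- Point-count instance of the reduction theorem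
`R(𝕃^{f/2} t) = DT_f(t) ∗ R(𝕃^{-f/2} t)` for the three-loop quiver with
superpotential `W = x(yz - zy)` and framing `f = 1`:
`q^(n²+n)·C(n) = Σ_{w=0}^{n} G(w,n)·q^(3w(n-w)+(n-w)²)·(y₀(w) - y₁(w))·C(n-w)`. -/
theorem reduction_theorem_pointcount {F : Type*} [Field F] [Fintype F] (n : ℕ) :
    ((Fintype.card F : ℤ) ^ (n ^ 2 + n) * commCount F n)
      = ∑ w ∈ Finset.range (n + 1),
          (grassCount F w n : ℤ)
            * (Fintype.card F : ℤ) ^ (3 * w * (n - w) + (n - w) ^ 2)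
            * ((stableFibreCount F w 0 : ℤ) - stableFibreCount F w 1)
            * commCount F (n - w) := by
  classical
  have : Fintype (Submodule F (Fin n → F)) := Fintype.ofFinite _
  let TT := Matrix (Fin n) (Fin n) F × Matrix (Fin n) (Fin n) F ×
      Matrix (Fin n) (Fin n) F × (Fin n → F)
  have h1 : ∑ p : TT, gW (csW p) = (Fintype.card F : ℤ) ^ (n ^ 2 + n) * commCount F n := by
    let A : (Matrix (Fin n) (Fin n) F × Matrix (Fin n) (Fin n) F × Matrix (Fin n) (Fin n) F) ×
      (Fin n → F) ≃ TT := (Equiv.prodAssoc _ _ _).trans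
        ((Equiv.refl _).prodCongr (Equiv.prodAssoc _ _ _))
    rw [← A.sum_comp, Fintype.sum_prod_type_right]
    have h0 : ∀ (m : Fin n → F), ∑ t : Matrix (Fin n) (Fin n) F × Matrix (Fin n) (Fin n) F ×
        Matrix (Fin n) (Fin n) F, gW (csW (A (t, m)))
        = (Fintype.card F : ℤ) ^ (n ^ 2) * commCount F n := by
      intro m
      have := sum_triples (F := F) n 0
      simp only [zero_add] at this
      have hg : gW (0 : F) = 1 := by simp [gW]
      rw [hg, mul_one] at this
      exact this
    simp only [h0]
    simp
    ring
  have h2 : ∑ p : TT, gW (csW p) = ∑ U : Submodule F (Fin n → F),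
      ∑ p : {p : TT // genS p = U}, gW (csW p.1) := by
    exact (Fintype.sum_fiberwise (genS : TT → _) (fun p : TT => gW (csW p))).symm
  rw [← h1, h2]
  rw [Finset.sum_congr rfl fun U _ => sum_U n U _ rfl]
  rw [← Finset.sum_fiberwise_of_maps_to (s := Finset.univ) (t := Finset.range (n + 1))
    (g := fun U : Submodule F (Fin n → F) => Module.finrank F U)]
  · refine Finset.sum_congr rfl fun w _ => ?_
    rw [Finset.sum_congr rfl (g := fun _ => (Fintype.card F : ℤ) ^ (3 * w * (n - w) + (n - w) ^ 2)
            * ((stableFibreCount F w 0 : ℤ) - stableFibreCount F w 1)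
            * commCount F (n - w))]
    · rw [Finset.sum_const, grassCount, Nat.card_eq_fintype_card, Fintype.card_subtype,
        nsmul_eq_mul]
      ring
    · intro U hU
      rw [Finset.mem_filter] at hU
      rw [hU.2]
  · intro U _
    have := Submodule.finrank_le U
    simp at this
    simp
    omega
end
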